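/- Let q be an odd prime power with q ≡ 1 (mod 4), let k be a divisor of q−1 with 3 < k < q−1, and suppose e = (q−1)/k is even. If (q,k) gives a 3-design, then k is congruent to 1, 2, 5, 10, 13, or 17 modulo 24. -/

import Mathlib

/-!
Setting: `F` is a finite field of order `q`. The projective line `PG(1,q)` is
modelled as `Projectivization F (Fin 2 → F)`. Since scalar matrices act trivially
on the projective line, the images of a set under all elements of `SL(2,F)` form
exactly its `PSL(2,F)`-orbit; `mapSL g` is the map of the projective line induced
by `g : SL(2,F)`. For `k ∣ q - 1`, the unique subgroup of order `k` of `Fˣ` is the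
set of `k`-th roots of unity `{x : F | x ^ k = 1}`, embedded into the projective
line via `x ↦ [x : 1]`. `(q, k)` gives a 3-design iff there is `lam > 0` such that
every 3-subset of the projective line lies in exactly `lam` blocks of the orbit.
-/

noncomputable section

open Matrix

/-- The point at infinity `[1 : 0]` of the projective line over `F`. -/
def inftyPt (F : Type) [Field F] : Projectivization F (Fin 2 → F) :=
  Projectivization.mk F ![1, 0] (by
    intro h
    simpa using congrFun h 0)

/-- The embedding of `F` into the projective line, `x ↦ [x : 1]`. -/
def embedPt (F : Type) [Field F] (x : F) : Projectivization F (Fin 2 → F) :=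
  Projectivization.mk F ![x, 1] (by
    intro h
    simpa using congrFun h 1)

/-- The action of `g : SL(2,F)` on the projective line (as linear fractional
transformation). -/
def mapSL {F : Type} [Field F] (g : Matrix.SpecialLinearGroup (Fin 2) F) :
    Projectivization F (Fin 2 → F) → Projectivization F (Fin 2 → F) :=
  Projectivization.map (Matrix.SpecialLinearGroup.toLin' g : (Fin 2 → F) →ₗ[F] (Fin 2 → F))
    (Matrix.SpecialLinearGroup.toLin' g).injective

/-- The starter block: the unique subgroup of order `k` of `Fˣ` (the `k`-th roots
of unity, for `k ∣ q - 1`), regarded as a subset of the projective line. -/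
def starterB (F : Type) [Field F] (k : ℕ) : Set (Projectivization F (Fin 2 → F)) :=
  embedPt F '' {x : F | x ^ k = 1}

/-- The `PSL(2,F)`-orbit `GB` of the starter block. -/
def designBlocks (F : Type) [Field F] (k : ℕ) :
    Set (Set (Projectivization F (Fin 2 → F))) :=
  {S | ∃ g : Matrix.SpecialLinearGroup (Fin 2) F, S = mapSL g '' starterB F k}

/-- `GB` is the block set of a `3-(q+1, k, lam)` design: `lam` is positive and every
3-subset of the projective line is contained in exactly `lam` blocks. -/
def isThreeDesign (F : Type) [Field F] (k lam : ℕ) : Prop :=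
  0 < lam ∧
    ∀ T : Finset (Projectivization F (Fin 2 → F)), T.card = 3 →
      {S ∈ designBlocks F k | (T : Set (Projectivization F (Fin 2 → F))) ⊆ S}.ncard = lam

/-- `(q, k)` gives a 3-design. -/
def gives3Design (F : Type) [Field F] (k : ℕ) : Prop :=
  ∃ lam : ℕ, isThreeDesign F k lam

/-!
Let `χ` be the quadratic character. The sign `χ ([u₀, u₁] [u₁, u₂] [u₂, u₀])` of a triple of points
of the projective line is invariant under `SL(2, q)`, and a projectivity of non-square determinant
reverses it, so the signs of all triples add up to zero. In a 3-design every triple of distinct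
points lies on the same number of blocks, and all blocks have the same sum of signs, so the signs of
the triples from the starter block `B` already add up to zero. As `q ≡ 1 (mod 4)` and `(q - 1) / k`
is even, `χ` is `1` at `-1` and on `B`, and the sign of `(x, x a, x a b)` is `f a * f b * f (a * b)`
with `f a = χ (1 - a)`. Hence this product is `-1` for exactly half of the `(k - 1) (k - 2)` pairs
`(a, b)` at which it is nonzero. Counting these negative pairs modulo 2, 4 and 3 by means of the
symmetries `(a, b) ↦ (b, a)`, `(a⁻¹, b⁻¹)`, `(b, (a b)⁻¹)` leaves the stated residues of `k`.
-/

open scoped Finset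

section OrbitCounting

variable {α : Type*} {s : Finset α} {σ τ : α → α}

theorem card_modEq_card_fixedPoints_of_iterate_eq_id [DecidableEq α] {p : ℕ} [Fact p.Prime]
    (hσ : σ^[p] = id) (hs : ∀ x ∈ s, σ x ∈ s) :
    #s ≡ #{x ∈ s | σ x = x} [MOD p] := by
  let restricted : Function.End s := Set.MapsTo.restrict σ s s hs
  have restricted_iterate (n : ℕ) (x : s) : ((restricted ^ n) x : α) = σ^[n] x := by
    induction n generalizing x with
    | zero => rfl
    | succ n ih => rw [pow_succ]; exact ih (restricted x)
  have restricted_pow : restricted ^ p ^ 1 = 1 := by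
    funext x
    rw [pow_one]
    exact Subtype.ext ((restricted_iterate p x).trans (congrFun hσ x))
  have fixed_card : Fintype.card restricted.fixedPoints = #{x ∈ s | σ x = x} := by
    rw [← Fintype.card_coe]
    exact Fintype.card_congr <| (Equiv.subtypeEquivRight fun _ ↦ Subtype.ext_iff).trans <|
      (Equiv.subtypeSubtypeEquivSubtypeInter (· ∈ s) fun x ↦ σ x = x).trans <|
      Equiv.subtypeEquivRight fun _ ↦ by simp
  simpa [fixed_card] using Equiv.Perm.card_fixedPoints_modEq restricted_pow

theorem two_dvd_card_of_involutive (hσ : Function.Involutive σ) (hs : ∀ x ∈ s, σ x ∈ s)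
    (hσ_ne : ∀ x ∈ s, σ x ≠ x) : 2 ∣ #s := by
  classical
  have no_fixedPoints : {x ∈ s | σ x = x} = ∅ := Finset.filter_eq_empty_iff.2 fun _ ↦ hσ_ne _
  have := card_modEq_card_fixedPoints_of_iterate_eq_id (p := 2) (funext hσ) hs
  rwa [no_fixedPoints, Finset.card_empty, Nat.modEq_zero_iff_dvd] at this

theorem dvd_card_of_orbits {n : ℕ} (orbit : α → Finset α) (hsub : ∀ x ∈ s, orbit x ⊆ s)
    (hself : ∀ x, x ∈ orbit x) (hcard : ∀ x ∈ s, #(orbit x) = n)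
    (heq : ∀ x, ∀ y ∈ orbit x, orbit y = orbit x) : n ∣ #s := by
  classical
  rw [Finset.card_eq_sum_card_image orbit s]
  refine Finset.dvd_sum fun _ hmem ↦ ?_
  obtain ⟨x, hx, rfl⟩ := Finset.mem_image.1 hmem
  have fiber_eq : {y ∈ s | orbit y = orbit x} = orbit x := by
    ext y
    simp only [Finset.mem_filter]
    exact ⟨fun h ↦ h.2 ▸ hself y, fun hy ↦ ⟨hsub x hx hy, heq x y hy⟩⟩
  rw [fiber_eq, hcard x hx]

theorem four_dvd_card_of_commute_involutive (hσ : Function.Involutive σ)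
    (hτ : Function.Involutive τ) (hcomm : Function.Commute σ τ)
    (hσs : ∀ x ∈ s, σ x ∈ s) (hτs : ∀ x ∈ s, τ x ∈ s)
    (hσ_ne : ∀ x ∈ s, σ x ≠ x) (hτ_ne : ∀ x ∈ s, τ x ≠ x) (hστ_ne : ∀ x ∈ s, σ (τ x) ≠ x) :
    4 ∣ #s := by
  classical
  refine dvd_card_of_orbits (fun x ↦ {x, σ x, τ x, σ (τ x)}) ?_ (by simp) ?_ ?_
  · intro x hx
    simp [Finset.insert_subset_iff, hx, hσs x hx, hτs x hx, hσs _ (hτs x hx)]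
  · intro x hx
    have σ_ne_τ : σ x ≠ τ x := fun h ↦ hστ_ne x hx (by rw [← h, hσ x])
    have σ_ne_στ : σ x ≠ σ (τ x) := hσ.injective.ne (hτ_ne x hx).symm
    have τ_ne_στ : τ x ≠ σ (τ x) := (hσ_ne _ (hτs x hx)).symm
    simp [(hσ_ne x hx).symm, (hτ_ne x hx).symm, (hστ_ne x hx).symm, σ_ne_τ, σ_ne_στ, τ_ne_στ]
  · intro x y hy
    have τσ_eq : τ (σ x) = σ (τ x) := (hcomm x).symm
    have τστ_eq : τ (σ (τ x)) = σ x := by rw [← hcomm, hτ]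
    simp only [Finset.mem_insert, Finset.mem_singleton] at hy
    ext z
    rcases hy with rfl | rfl | rfl | rfl <;>
      simp only [hσ _, hτ _, τσ_eq, τστ_eq, Finset.mem_insert, Finset.mem_singleton] <;> tauto

end OrbitCounting

theorem mod_twentyFour_of_two_mul_eq {k N : ℕ} (hN : 2 * (N : ℤ) = ((k : ℤ) - 1) * (k - 2))
    (two_dvd : 2 ∣ N) (four_dvd : k % 4 = 2 → 4 ∣ N) (mod_three : N % 3 ≠ 1) :
    k % 24 ∈ ({1, 2, 5, 10, 13, 17} : Finset ℕ) := by
  obtain ⟨m, r, hr, rfl⟩ : ∃ m r, r < 24 ∧ k = 24 * m + r := ⟨k / 24, k % 24, by omega, by omega⟩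
  simp only [Finset.mem_insert, Finset.mem_singleton]
  push_cast at hN
  interval_cases r <;> ring_nf at hN <;> omega

theorem eq_of_mul_self_eq_one {G : Type*} [Group G] [Finite G] [IsCyclic G] {a b : G}
    (ha : a * a = 1) (hb : b * b = 1) (ha1 : a ≠ 1) (hb1 : b ≠ 1) : a = b := by
  classical
  have := Fintype.ofFinite G
  by_contra hab
  have subset_sq_eq_one : {1, a, b} ⊆ ({x | x ^ 2 = 1} : Finset G) := by
    simp [Finset.insert_subset_iff, sq, ha, hb]
  have three_le_two : 3 ≤ 2 := calc
    3 = #{1, a, b} := (Finset.card_eq_three.2 ⟨1, a, b, ha1.symm, hb1.symm, hab, rfl⟩).symm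
    _ ≤ #{x : G | x ^ 2 = 1} := Finset.card_le_card subset_sq_eq_one
    _ ≤ 2 := IsCyclic.card_pow_eq_one_le two_pos
  omega

/-- A function on a group with values in `{0, 1, -1}` that vanishes exactly at the identity and is
invariant under inversion. The example to keep in mind is `x ↦ χ (1 - x)`, for `χ` a quadratic
character and `x` running over a group of roots of unity. -/
structure IsEvenSign {G : Type*} [Group G] (f : G → ℤ) : Prop where
  map_one : f 1 = 0
  eq_one_or_eq_neg_one : ∀ x, x ≠ 1 → f x = 1 ∨ f x = -1
  map_inv : ∀ x, f x⁻¹ = f x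

section EvenSign

variable {G : Type*} [CommGroup G] [Fintype G] {f : G → ℤ}

/-- The pairs `(a, b)` at which the triple product `f a * f b * f (a * b)` is `-1`. For an even sign
function, the product only depends on the unordered triple `{a, b, (a * b)⁻¹}` and is invariant
under inverting all of its members. -/
def negPairs (f : G → ℤ) : Finset (G × G) := {p | f p.1 * f p.2 * f (p.1 * p.2) = -1}

/-- The elements whose square has sign `-1`; they parametrize the diagonal of `negPairs f`. -/
def negSquares (f : G → ℤ) : Finset G := {a | f (a * a) = -1}

/-- The cube roots of unity of sign `-1`; they parametrize the pairs in `negPairs f` that are fixed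
by the rotation `(a, b) ↦ (b, (a * b)⁻¹)`. -/
def negCubeRoots [DecidableEq G] (f : G → ℤ) : Finset G := {a | a ^ 3 = 1 ∧ f a = -1}

theorem mem_negPairs {a b : G} : (a, b) ∈ negPairs f ↔ f a * f b * f (a * b) = -1 := by
  simp [negPairs]

theorem mem_negSquares {a : G} : a ∈ negSquares f ↔ f (a * a) = -1 := by
  simp [negSquares]

theorem mem_negCubeRoots [DecidableEq G] {a : G} :
    a ∈ negCubeRoots f ↔ a ^ 3 = 1 ∧ f a = -1 := by
  simp [negCubeRoots]

theorem swap_mem_negPairs {p : G × G} (hp : p ∈ negPairs f) : p.swap ∈ negPairs f := by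
  rw [Prod.swap, mem_negPairs, mul_comm p.2, mul_comm (f p.2)]
  exact mem_negPairs.1 hp

namespace IsEvenSign

theorem ne_one_of_mem_negPairs (hf : IsEvenSign f) {a b : G} (h : (a, b) ∈ negPairs f) :
    a ≠ 1 ∧ b ≠ 1 ∧ a * b ≠ 1 := by
  rw [mem_negPairs] at h
  refine ⟨?_, ?_, ?_⟩ <;> intro h1 <;> simp [h1, hf.map_one] at h

theorem mul_self_ne_one_of_mem_negSquares (hf : IsEvenSign f) {a : G} (h : a ∈ negSquares f) :
    a * a ≠ 1 := by
  intro h1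
  simp [mem_negSquares, h1, hf.map_one] at h

theorem inv_mem_negPairs (hf : IsEvenSign f) {p : G × G} (hp : p ∈ negPairs f) :
    p⁻¹ ∈ negPairs f := by
  obtain ⟨a, b⟩ := p
  rw [Prod.inv_mk, mem_negPairs, ← mul_inv, hf.map_inv, hf.map_inv, hf.map_inv]
  exact mem_negPairs.1 hp

theorem inv_mem_negSquares (hf : IsEvenSign f) {a : G} (ha : a ∈ negSquares f) :
    a⁻¹ ∈ negSquares f := by
  rw [mem_negSquares, ← mul_inv, hf.map_inv]
  exact mem_negSquares.1 ha

theorem rotate_mem_negPairs (hf : IsEvenSign f) {p : G × G} (hp : p ∈ negPairs f) :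
    (p.2, (p.1 * p.2)⁻¹) ∈ negPairs f := by
  obtain ⟨a, b⟩ := p
  have mul_rotate : b * (a * b)⁻¹ = a⁻¹ := by simp
  rw [mem_negPairs] at hp ⊢
  rw [mul_rotate, hf.map_inv, hf.map_inv, ← hp]
  ring

theorem sum_sq_tripleProduct (hf : IsEvenSign f) :
    ∑ p : G × G, (f p.1 * f p.2 * f (p.1 * p.2)) ^ 2 =
      ((Fintype.card G : ℤ) - 1) * (Fintype.card G - 2) := by
  classical
  have sq_eq (x : G) : f x ^ 2 = 1 - if x = 1 then 1 else 0 := by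
    split_ifs with hx
    · simp [hx, hf.map_one]
    · rcases hf.eq_one_or_eq_neg_one x hx with h | h <;> simp [h]
  have inner_sum (a : G) : ∑ b, f a ^ 2 * (f b ^ 2 * f (a * b) ^ 2) =
      f a ^ 2 * ((Fintype.card G : ℤ) - 2) := by
    by_cases ha : a = 1
    · simp [ha, hf.map_one]
    rw [← Finset.mul_sum]
    simp only [sq_eq, mul_eq_one_iff_eq_inv']
    simp only [ha, ↓reduceIte, sub_zero, mul_sub, mul_one, mul_ite, mul_zero,
      Finset.sum_sub_distrib, Finset.sum_const, Finset.card_univ, Int.nsmul_eq_mul,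
      Finset.sum_ite_eq', Finset.mem_univ, inv_eq_one, one_mul]
    ring
  simp only [mul_pow, mul_assoc, Fintype.sum_prod_type, inner_sum]
  rw [← Finset.sum_mul]
  simp [sq_eq, Finset.sum_sub_distrib]

theorem two_mul_card_negPairs (hf : IsEvenSign f)
    (hsum : ∑ p : G × G, f p.1 * f p.2 * f (p.1 * p.2) = 0) :
    2 * (#(negPairs f) : ℤ) = ((Fintype.card G : ℤ) - 1) * (Fintype.card G - 2) := by
  have trichotomy (x : G) : f x = 0 ∨ f x = 1 ∨ f x = -1 := by
    by_cases hx : x = 1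
    · exact .inl (hx ▸ hf.map_one)
    · exact .inr (hf.eq_one_or_eq_neg_one x hx)
  have two_mul_indicator (p : G × G) : 2 * (if f p.1 * f p.2 * f (p.1 * p.2) = -1 then 1 else 0) =
      (f p.1 * f p.2 * f (p.1 * p.2)) ^ 2 - f p.1 * f p.2 * f (p.1 * p.2) := by
    rcases trichotomy p.1 with h₁ | h₁ | h₁ <;> rcases trichotomy p.2 with h₂ | h₂ | h₂ <;>
      rcases trichotomy (p.1 * p.2) with h₃ | h₃ | h₃ <;> simp [h₁, h₂, h₃]
  rw [← hf.sum_sq_tripleProduct, ← sub_zero (∑ _, _), ← hsum, ← Finset.sum_sub_distrib, negPairs,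
    Finset.card_filter, Nat.cast_sum, Finset.mul_sum]
  exact Finset.sum_congr rfl fun p _ ↦ mod_cast two_mul_indicator p

theorem four_dvd_card_negPairs_offDiag [IsCyclic G] [DecidableEq G] (hf : IsEvenSign f) :
    4 ∣ #{p ∈ negPairs f | p.1 ≠ p.2} := by
  refine four_dvd_card_of_commute_involutive (σ := Prod.swap) (τ := Inv.inv) Prod.swap_swap
    inv_inv (fun _ ↦ rfl) ?_ ?_ ?_ ?_ ?_ <;> rintro ⟨a, b⟩ h <;>
    obtain ⟨hmem, hne⟩ := Finset.mem_filter.1 h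
  · exact Finset.mem_filter.2 ⟨swap_mem_negPairs hmem, hne.symm⟩
  · exact Finset.mem_filter.2 ⟨hf.inv_mem_negPairs hmem, inv_injective.ne hne⟩
  · exact fun heq ↦ hne (congrArg Prod.snd heq)
  · intro heq
    obtain ⟨ha, hb, -⟩ := hf.ne_one_of_mem_negPairs hmem
    simp only [Prod.inv_mk, Prod.mk.injEq, inv_eq_iff_mul_eq_one] at heq
    exact hne (eq_of_mul_self_eq_one heq.1 heq.2 ha hb)
  · intro heq
    have inv_eq : b⁻¹ = a := congrArg Prod.fst heq
    exact (hf.ne_one_of_mem_negPairs hmem).2.2 (by rw [← inv_eq, inv_mul_cancel])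

theorem two_dvd_card_negSquares (hf : IsEvenSign f) : 2 ∣ #(negSquares f) :=
  two_dvd_card_of_involutive inv_involutive (fun _ ↦ hf.inv_mem_negSquares) fun _ ha heq ↦
    hf.mul_self_ne_one_of_mem_negSquares ha (inv_eq_iff_mul_eq_one.1 heq)

theorem four_dvd_card_negSquares (hf : IsEvenSign f) (hcard : Fintype.card G % 4 = 2) :
    4 ∣ #(negSquares f) := by
  obtain ⟨z, hz⟩ := exists_prime_orderOf_dvd_card (G := G) 2 (by omega)
  have z_mul_z : z * z = 1 := by rw [← sq, ← hz, pow_orderOf_eq_one]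
  have z_ne_one : z ≠ 1 := by rintro rfl; simp at hz
  have not_four_dvd_orderOf (a : G) : ¬ 4 ∣ orderOf a := fun h ↦ by
    have := h.trans (orderOf_dvd_card (x := a))
    omega
  refine four_dvd_card_of_commute_involutive (σ := (z * ·)) (τ := Inv.inv)
    (fun a ↦ by simp [← mul_assoc, z_mul_z]) inv_inv ?_ ?_ (fun _ ↦ hf.inv_mem_negSquares) ?_ ?_ ?_
  · intro a
    simp [inv_eq_of_mul_eq_one_left z_mul_z, mul_comm]
  · intro a ha
    rwa [mem_negSquares, mul_mul_mul_comm, z_mul_z, one_mul, ← mem_negSquares]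
  · exact fun a _ heq ↦ z_ne_one (mul_eq_right.1 heq)
  · exact fun a ha heq ↦
      hf.mul_self_ne_one_of_mem_negSquares ha (inv_eq_iff_mul_eq_one.1 heq)
  · intro a _ heq
    have a_mul_a : a * a = z := (mul_inv_eq_iff_eq_mul.1 heq).symm
    refine not_four_dvd_orderOf a (orderOf_eq_prime_pow (p := 2) (n := 1) ?_ ?_).symm.dvd
    · simpa [sq, a_mul_a]
    · rw [pow_succ, pow_one, pow_mul, sq a, a_mul_a, sq, z_mul_z]

theorem diag_mem_negPairs_iff (hf : IsEvenSign f) {a : G} :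
    (a, a) ∈ negPairs f ↔ a ∈ negSquares f := by
  rw [mem_negPairs, mem_negSquares]
  by_cases ha : a = 1
  · simp [ha, hf.map_one]
  · rcases hf.eq_one_or_eq_neg_one a ha with h | h <;> simp [h]

theorem card_negPairs_eq_add [DecidableEq G] (hf : IsEvenSign f) :
    #(negPairs f) = #{p ∈ negPairs f | p.1 ≠ p.2} + #(negSquares f) := by
  have diag_eq_image : {p ∈ negPairs f | ¬ p.1 ≠ p.2} = (negSquares f).image fun a ↦ (a, a) := by
    ext ⟨a, b⟩
    simp only [Finset.mem_filter, Finset.mem_image, not_not, Prod.mk.injEq,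
      ← hf.diag_mem_negPairs_iff]
    constructor
    · rintro ⟨h, rfl⟩
      exact ⟨a, h, rfl, rfl⟩
    · rintro ⟨c, h, rfl, rfl⟩
      exact ⟨h, rfl⟩
  rw [← Finset.card_filter_add_card_filter_not (s := negPairs f) (fun p ↦ p.1 ≠ p.2),
    diag_eq_image, Finset.card_image_of_injective _ fun _ _ h ↦ congrArg Prod.fst h]

theorem card_negPairs_modEq_three [DecidableEq G] (hf : IsEvenSign f) :
    #(negPairs f) ≡ #(negCubeRoots f) [MOD 3] := by
  have rotate_iterate : (fun p : G × G ↦ (p.2, (p.1 * p.2)⁻¹))^[3] = id := by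
    ext p <;> simp
  have fixed_eq_image : {p ∈ negPairs f | (p.2, (p.1 * p.2)⁻¹) = p} =
      (negCubeRoots f).image fun a ↦ (a, a) := by
    ext ⟨a, b⟩
    simp only [Finset.mem_filter, Finset.mem_image, Prod.mk.injEq, mem_negCubeRoots]
    constructor
    · rintro ⟨h, rfl, h_inv⟩
      rw [inv_eq_iff_eq_inv] at h_inv
      rw [hf.diag_mem_negPairs_iff, mem_negSquares, h_inv, hf.map_inv] at h
      exact ⟨b, ⟨by rw [pow_succ, sq, h_inv, inv_mul_cancel], h⟩, rfl, rfl⟩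
    · rintro ⟨c, ⟨c_cube, h⟩, rfl, rfl⟩
      have c_mul_c : c * c = c⁻¹ := eq_inv_of_mul_eq_one_left (by rw [← c_cube, pow_succ, sq])
      rw [hf.diag_mem_negPairs_iff, mem_negSquares, c_mul_c, hf.map_inv, inv_inv]
      exact ⟨h, rfl, rfl⟩
  have diag_injective : Function.Injective fun a : G ↦ (a, a) := fun _ _ h ↦ congrArg Prod.fst h
  rw [← Finset.card_image_of_injective (negCubeRoots f) diag_injective, ← fixed_eq_image]
  exact card_modEq_card_fixedPoints_of_iterate_eq_id rotate_iterate fun _ ↦ hf.rotate_mem_negPairs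

theorem card_negCubeRoots_eq_zero_or_two [IsCyclic G] [DecidableEq G] (hf : IsEvenSign f) :
    #(negCubeRoots f) = 0 ∨ #(negCubeRoots f) = 2 := by
  have one_notMem : 1 ∉ negCubeRoots f := by simp [mem_negCubeRoots, hf.map_one]
  have two_dvd : 2 ∣ #(negCubeRoots f) := by
    refine two_dvd_card_of_involutive inv_involutive ?_ ?_
    · intro a
      simp [mem_negCubeRoots, hf.map_inv]
    · intro a ha heq
      have a_mul_a : a * a = 1 := inv_eq_iff_mul_eq_one.1 heq
      have a_eq_one : a = 1 := by
        simpa [pow_succ, a_mul_a] using (mem_negCubeRoots.1 ha).1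
      exact one_notMem (a_eq_one ▸ ha)
  have lt_three : #(negCubeRoots f) < 3 := calc
    #(negCubeRoots f) < #{a : G | a ^ 3 = 1} := Finset.card_lt_card <|
      Finset.ssubset_iff_subset_ne.2 ⟨Finset.monotone_filter_right _ fun _ _ h ↦ h.1,
        fun heq ↦ one_notMem (by simp [heq])⟩
    _ ≤ 3 := IsCyclic.card_pow_eq_one_le three_pos
  omega

theorem two_dvd_card_negPairs [IsCyclic G] (hf : IsEvenSign f) : 2 ∣ #(negPairs f) := by
  classical
  rw [hf.card_negPairs_eq_add]
  exact dvd_add (dvd_trans (by norm_num) hf.four_dvd_card_negPairs_offDiag)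
    hf.two_dvd_card_negSquares

theorem four_dvd_card_negPairs [IsCyclic G] (hf : IsEvenSign f) (hcard : Fintype.card G % 4 = 2) :
    4 ∣ #(negPairs f) := by
  classical
  rw [hf.card_negPairs_eq_add]
  exact dvd_add hf.four_dvd_card_negPairs_offDiag (hf.four_dvd_card_negSquares hcard)

theorem card_negPairs_mod_three_ne_one [IsCyclic G] (hf : IsEvenSign f) :
    #(negPairs f) % 3 ≠ 1 := by
  classical
  rw [hf.card_negPairs_modEq_three]
  rcases hf.card_negCubeRoots_eq_zero_or_two with h | h <;> simp [h]

theorem card_mod_twentyFour [IsCyclic G] (hf : IsEvenSign f)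
    (hsum : ∑ p : G × G, f p.1 * f p.2 * f (p.1 * p.2) = 0) :
    Fintype.card G % 24 ∈ ({1, 2, 5, 10, 13, 17} : Finset ℕ) :=
  mod_twentyFour_of_two_mul_eq (hf.two_mul_card_negPairs hsum) hf.two_dvd_card_negPairs
    hf.four_dvd_card_negPairs hf.card_negPairs_mod_three_ne_one

end IsEvenSign

end EvenSign

section TupleSums

variable {X ι R : Type*} [Fintype X] [Fintype ι] [DecidableEq ι]

theorem sum_sum_block_eq_mul_sum [Semiring R]
    [∀ S : Set X, DecidablePred fun t : ι → X ↦ ∀ i, t i ∈ S] {lam : ℕ} (blocks : Finset (Set X))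
    (hblocks : ∀ T : Finset X, #T = Fintype.card ι →
      {S ∈ (blocks : Set (Set X)) | (T : Set X) ⊆ S}.ncard = lam)
    (w : (ι → X) → R) (hw : ∀ t, ¬ Function.Injective t → w t = 0) :
    ∑ S ∈ blocks, ∑ t : ι → X with ∀ i, t i ∈ S, w t = lam * ∑ t, w t := by
  classical
  simp only [Finset.sum_filter]
  rw [Finset.sum_comm, Finset.mul_sum]
  refine Finset.sum_congr rfl fun t _ ↦ ?_
  rw [← Finset.sum_filter, Finset.sum_const, nsmul_eq_mul]
  by_cases ht : Function.Injective t
  · have blocks_through : ({S ∈ blocks | ∀ i, t i ∈ S} : Finset (Set X)) =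
        {S ∈ (blocks : Set (Set X)) | (Finset.univ.image t : Set X) ⊆ S} := by
      ext S
      simp [Set.range_subset_iff]
    rw [← hblocks (Finset.univ.image t) (Finset.card_image_of_injective _ ht), ← blocks_through,
      Set.ncard_coe_finset]
  · simp [hw t ht]

theorem sum_filter_range_eq_sum_comp {Y : Type*} [Fintype Y] [AddCommMonoid R] {e : Y → X}
    [DecidablePred fun t : ι → X ↦ ∀ i, t i ∈ Set.range e] (he : Function.Injective e)
    (w : (ι → X) → R) :
    ∑ t : ι → X with ∀ i, t i ∈ Set.range e, w t = ∑ u : ι → Y, w (e ∘ u) := by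
  classical
  have filter_eq_image : ({t | ∀ i, t i ∈ Set.range e} : Finset (ι → X)) =
      Finset.univ.image (e ∘ ·) := by
    ext t
    simp only [Finset.mem_filter, Finset.mem_univ, true_and, Finset.mem_image]
    constructor
    · intro h
      choose u hu using h
      exact ⟨u, funext hu⟩
    · rintro ⟨u, rfl⟩ i
      exact ⟨u i, rfl⟩
  rw [filter_eq_image, Finset.sum_image fun _ _ _ _ h ↦ he.comp_left h]

end TupleSums

section TripleSign

variable {F : Type*} [Field F]

/-- The cyclic product `[u₀, u₁] [u₁, u₂] [u₂, u₀]` of the determinants of three plane vectors. -/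
def cyclicDet (u : Fin 3 → Fin 2 → F) : F :=
  ∏ i, (Matrix.of ![u i, u (i + 1)]).det

theorem cyclicDet_comp (f : (Fin 2 → F) →ₗ[F] (Fin 2 → F)) (u : Fin 3 → Fin 2 → F) :
    cyclicDet (f ∘ u) = LinearMap.det f ^ 3 * cyclicDet u := by
  have det_map (v w : Fin 2 → F) : (Matrix.of ![f v, f w]).det =
      LinearMap.det f * (Matrix.of ![v, w]).det := by
    have comp_eq : f ∘ ![v, w] = ![f v, f w] := by
      ext i
      fin_cases i <;> rfl
    simpa only [Pi.basisFun_det_apply, comp_eq] using (Pi.basisFun F (Fin 2)).det_comp f ![v, w]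
  simp only [cyclicDet, Function.comp_apply, det_map, Finset.prod_mul_distrib, Finset.prod_const,
    Finset.card_univ, Fintype.card_fin]

theorem cyclicDet_smul (c : Fin 3 → F) (u : Fin 3 → Fin 2 → F) :
    cyclicDet (fun i ↦ c i • u i) = (∏ i, c i) ^ 2 * cyclicDet u := by
  simp only [cyclicDet, Fin.isValue, det_fin_two, of_apply, cons_val', Pi.smul_apply, smul_eq_mul,
    cons_val_fin_one, cons_val_zero, cons_val_one, Fin.prod_univ_three, zero_add, Fin.reduceAdd]
  ring

theorem cyclicDet_eq_zero {u : Fin 3 → Fin 2 → F} (hu : ¬ Function.Injective u) :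
    cyclicDet u = 0 := by
  obtain ⟨i, hi⟩ : ∃ i, u i = u (i + 1) := by
    obtain ⟨i, j, huij, hij⟩ := Function.not_injective_iff.1 hu
    have cyclic_neighbours : ∀ i j : Fin 3, i ≠ j → j = i + 1 ∨ i = j + 1 := by decide
    rcases cyclic_neighbours i j hij with rfl | rfl
    · exact ⟨i, huij⟩
    · exact ⟨j, huij.symm⟩
  exact Finset.prod_eq_zero (Finset.mem_univ i)
    (Matrix.det_zero_of_row_eq Fin.zero_ne_one hi)

theorem cyclicDet_affine (x : Fin 3 → F) :
    cyclicDet (fun i ↦ ![x i, 1]) = ∏ i, (x i - x (i + 1)) := by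
  simp [cyclicDet, Matrix.det_fin_two]

variable [Fintype F] [DecidableEq F]

/-- The orientation character of triples of points of the projective line: the quadratic character
of the cyclic determinant of representatives. For odd `q` it separates the two orbits of `PSL(2, q)`
on ordered triples of distinct points. It does not depend on the representatives because rescaling
them multiplies the cyclic determinant by a square. -/
def tripleSign (t : Fin 3 → Projectivization F (Fin 2 → F)) : ℤ :=
  quadraticChar F (cyclicDet fun i ↦ (t i).rep)

theorem tripleSign_mk (u : Fin 3 → Fin 2 → F) (hu : ∀ i, u i ≠ 0) :
    tripleSign (fun i ↦ Projectivization.mk F (u i) (hu i)) = quadraticChar F (cyclicDet u) := by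
  choose c hc using fun i ↦ Projectivization.exists_smul_eq_mk_rep F (u i) (hu i)
  have prod_ne_zero : (∏ i, (c i : F)) ≠ 0 := Finset.prod_ne_zero_iff.2 fun i _ ↦ (c i).ne_zero
  simp only [tripleSign, ← hc, Units.smul_def]
  rw [cyclicDet_smul, map_mul, quadraticChar_sq_one' prod_ne_zero, one_mul]

theorem tripleSign_map (f : (Fin 2 → F) →ₗ[F] (Fin 2 → F)) (hf : Function.Injective f)
    (t : Fin 3 → Projectivization F (Fin 2 → F)) :
    tripleSign (Projectivization.map f hf ∘ t) =
      quadraticChar F (LinearMap.det f) ^ 3 * tripleSign t := by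
  have map_eq_mk : Projectivization.map f hf ∘ t = fun i ↦ Projectivization.mk F (f (t i).rep)
      ((map_ne_zero_iff f hf).2 (t i).rep_nonzero) := by
    funext i
    conv_lhs => rw [Function.comp_apply, ← (t i).mk_rep, Projectivization.map_mk]
  rw [map_eq_mk, tripleSign_mk]
  exact (congrArg _ (cyclicDet_comp f _)).trans (by rw [map_mul, map_pow, tripleSign])

theorem tripleSign_eq_zero {t : Fin 3 → Projectivization F (Fin 2 → F)}
    (ht : ¬ Function.Injective t) : tripleSign t = 0 := by
  rw [tripleSign, quadraticChar_eq_zero_iff]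
  exact cyclicDet_eq_zero fun h ↦ ht fun _ _ hij ↦ h (congrArg Projectivization.rep hij)

theorem sum_tripleSign_eq_zero [Fintype (Projectivization F (Fin 2 → F))] (hF : ringChar F ≠ 2) :
    ∑ t : Fin 3 → Projectivization F (Fin 2 → F), tripleSign t = 0 := by
  obtain ⟨n, hn⟩ := quadraticChar_exists_neg_one hF
  have n_ne_zero : n ≠ 0 := by rintro rfl; simp at hn
  let f : (Fin 2 → F) →ₗ[F] (Fin 2 → F) := (Matrix.diagonal ![n, 1]).toLin'
  have det_f : LinearMap.det f = n := by simp [f]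
  have f_injective : Function.Injective f :=
    (LinearMap.equivOfDetNeZero f (det_f ▸ n_ne_zero)).injective
  have map_bijective :
      Function.Bijective (Projectivization.map f f_injective ∘ · : (Fin 3 → _) → _) :=
    (Projectivization.map_injective f f_injective).comp_left.bijective_of_finite
  have eq_neg := map_bijective.sum_comp tripleSign
  simp only [tripleSign_map, det_f, hn, ← Finset.mul_sum] at eq_neg
  omega

end TripleSign

section StarterBlock

variable {F : Type} [Field F] {k : ℕ}

theorem tripleSign_mapSL [Fintype F] [DecidableEq F] (g : SpecialLinearGroup (Fin 2) F)
    (t : Fin 3 → Projectivization F (Fin 2 → F)) :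
    tripleSign (mapSL g ∘ t) = tripleSign t := by
  have det_eq_one :
      LinearMap.det (SpecialLinearGroup.toLin' g : (Fin 2 → F) →ₗ[F] (Fin 2 → F)) = 1 := by
    rw [SpecialLinearGroup.toLin'_to_linearMap, LinearMap.det_toLin', g.det_coe]
  unfold mapSL
  rw [tripleSign_map, det_eq_one, map_one, one_pow, one_mul]

theorem mapSL_injective (g : SpecialLinearGroup (Fin 2) F) : Function.Injective (mapSL g) :=
  Projectivization.map_injective _ _

theorem embedPt_injective : Function.Injective (embedPt F) := by
  intro x y hxy
  obtain ⟨c, hc⟩ := (Projectivization.mk_eq_mk_iff' F _ _ _ _).1 hxy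
  have c_eq_one : c = 1 := by simpa using congrFun hc 1
  simpa [c_eq_one, eq_comm] using congrFun hc 0

theorem starterB_eq_range [NeZero k] :
    starterB F k = Set.range fun x : rootsOfUnity k F ↦ embedPt F (x : Fˣ) := by
  ext P
  constructor
  · rintro ⟨x, hx, rfl⟩
    exact ⟨rootsOfUnity.mkOfPowEq x hx, rfl⟩
  · rintro ⟨x, rfl⟩
    exact ⟨(x : Fˣ), (mem_rootsOfUnity' k _).1 x.2, rfl⟩

theorem sum_tripleSign_block [Fintype F] [DecidableEq F] [NeZero k] [Fintype (rootsOfUnity k F)]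
    [Fintype (Projectivization F (Fin 2 → F))] {S : Set (Projectivization F (Fin 2 → F))}
    [DecidablePred fun t : Fin 3 → Projectivization F (Fin 2 → F) ↦ ∀ i, t i ∈ S]
    (hS : S ∈ designBlocks F k) :
    ∑ t : Fin 3 → Projectivization F (Fin 2 → F) with ∀ i, t i ∈ S, tripleSign t =
      ∑ u : Fin 3 → rootsOfUnity k F,
        quadraticChar F (∏ i, (((u i : Fˣ) : F) - (u (i + 1) : Fˣ))) := by
  obtain ⟨g, hg⟩ := hS
  have point_injective : Function.Injective fun x : rootsOfUnity k F ↦ embedPt F (x : Fˣ) :=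
    embedPt_injective.comp (Units.val_injective.comp Subtype.val_injective)
  rw [starterB_eq_range, ← Set.range_comp] at hg
  subst hg
  rw [sum_filter_range_eq_sum_comp ((mapSL_injective g).comp point_injective)]
  refine Finset.sum_congr rfl fun u _ ↦ ?_
  rw [Function.comp_assoc, tripleSign_mapSL, ← cyclicDet_affine]
  exact tripleSign_mk _ _

theorem sum_quadraticChar_cyclic_eq_zero [Fintype F] [DecidableEq F] [NeZero k]
    [Fintype (rootsOfUnity k F)] (hF : ringChar F ≠ 2) (hdes : gives3Design F k) :
    ∑ u : Fin 3 → rootsOfUnity k F,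
      quadraticChar F (∏ i, (((u i : Fˣ) : F) - (u (i + 1) : Fˣ))) = 0 := by
  classical
  have := Fintype.ofFinite (Projectivization F (Fin 2 → F))
  obtain ⟨lam, -, hlam⟩ := hdes
  let blocks : Finset (Set (Projectivization F (Fin 2 → F))) :=
    (designBlocks F k).toFinite.toFinset
  have blocks_nonempty : blocks.Nonempty :=
    ⟨mapSL 1 '' starterB F k, (Set.Finite.mem_toFinset _).2 ⟨1, rfl⟩⟩
  have blocks_mul_sum := calc
    #blocks • ∑ u : Fin 3 → rootsOfUnity k F,
        quadraticChar F (∏ i, (((u i : Fˣ) : F) - (u (i + 1) : Fˣ)))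
      = ∑ S ∈ blocks, ∑ t : Fin 3 → Projectivization F (Fin 2 → F) with ∀ i, t i ∈ S,
          tripleSign t :=
        (Finset.sum_eq_card_nsmul fun S hS ↦
          sum_tripleSign_block ((Set.Finite.mem_toFinset _).1 hS)).symm
    _ = lam * ∑ t : Fin 3 → Projectivization F (Fin 2 → F), tripleSign t :=
        sum_sum_block_eq_mul_sum blocks (by simpa [blocks] using hlam) tripleSign fun _ ↦
          tripleSign_eq_zero
    _ = 0 := by rw [sum_tripleSign_eq_zero hF, mul_zero]
  exact (smul_eq_zero.1 blocks_mul_sum).resolve_left blocks_nonempty.card_ne_zero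

end StarterBlock

section RootsOfUnity

variable {F : Type*} [Field F] [Fintype F] {k : ℕ}

theorem natCard_rootsOfUnity_of_dvd (hk : k ∣ Fintype.card F - 1) :
    Nat.card (rootsOfUnity k F) = k := by
  classical
  rw [rootsOfUnity_eq_ker, IsCyclic.card_powMonoidHom_ker, Nat.card_eq_fintype_card,
    Fintype.card_units, Nat.gcd_eq_right hk]

variable [DecidableEq F]

theorem quadraticChar_eq_one_of_pow_eq_one (hF : ringChar F ≠ 2)
    (hk : 2 * k ∣ Fintype.card F - 1) {x : F} (hx0 : x ≠ 0) (hx : x ^ k = 1) :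
    quadraticChar F x = 1 := by
  obtain ⟨m, hm⟩ := hk
  rw [quadraticChar_one_iff_isSquare hx0, FiniteField.isSquare_iff hF hx0]
  have half_card : Fintype.card F / 2 = k * m := by
    have := FiniteField.odd_card_of_char_ne_two hF
    rw [mul_assoc] at hm
    omega
  rw [half_card, pow_mul, hx, one_pow]

theorem quadraticChar_neg_one_eq_one (hF : Fintype.card F % 4 ≠ 3) : quadraticChar F (-1) = 1 :=
  (quadraticChar_one_iff_isSquare (neg_ne_zero.2 one_ne_zero)).2
    (FiniteField.isSquare_neg_one_iff.2 hF)

/-- The sign `χ (1 - x)` of a `k`-th root of unity `x`, for `χ` the quadratic character. -/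
def rootSign (k : ℕ) (F : Type*) [Field F] [Fintype F] [DecidableEq F] (x : rootsOfUnity k F) : ℤ :=
  quadraticChar F (1 - (x : Fˣ))

theorem isEvenSign_rootSign (hneg : quadraticChar F (-1) = 1)
    (hroots : ∀ x : rootsOfUnity k F, quadraticChar F (x : Fˣ) = 1) :
    IsEvenSign (rootSign k F) where
  map_one := by simp [rootSign]
  eq_one_or_eq_neg_one x hx := quadraticChar_dichotomy <| sub_ne_zero.2 fun h ↦
    hx (Subtype.ext (Units.ext h.symm))
  map_inv x := by
    have one_sub_inv : 1 - (((x⁻¹ : rootsOfUnity k F) : Fˣ) : F) =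
        -1 * ((x⁻¹ : rootsOfUnity k F) : Fˣ) * (1 - (x : Fˣ)) := by
      simp [mul_sub, neg_add_eq_sub]
    rw [rootSign, one_sub_inv, map_mul, map_mul, hneg, hroots, one_mul, one_mul, rootSign]

/-- The triple `(x, x * a, x * a * b)` with first entry `x` and successive ratios `a` and `b`. -/
def tripleEquivRatios (G : Type*) [Group G] : G × G × G ≃ (Fin 3 → G) where
  toFun p := ![p.1, p.1 * p.2.1, p.1 * p.2.1 * p.2.2]
  invFun u := (u 0, (u 0)⁻¹ * u 1, (u 1)⁻¹ * u 2)
  left_inv p := by simp [mul_assoc]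
  right_inv u := by
    ext i
    fin_cases i <;> simp

theorem sum_quadraticChar_cyclic_eq_mul_sum [Fintype (rootsOfUnity k F)]
    (hneg : quadraticChar F (-1) = 1)
    (hroots : ∀ x : rootsOfUnity k F, quadraticChar F (x : Fˣ) = 1) :
    ∑ u : Fin 3 → rootsOfUnity k F,
        quadraticChar F (∏ i, (((u i : Fˣ) : F) - (u (i + 1) : Fˣ))) =
      Fintype.card (rootsOfUnity k F) * ∑ p : rootsOfUnity k F × rootsOfUnity k F,
        rootSign k F p.1 * rootSign k F p.2 * rootSign k F (p.1 * p.2) := by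
  rw [← (tripleEquivRatios (rootsOfUnity k F)).sum_comp, Fintype.sum_prod_type,
    ← nsmul_eq_mul, ← Finset.card_univ, ← Finset.sum_const]
  refine Finset.sum_congr rfl fun x _ ↦ Finset.sum_congr rfl fun ⟨a, b⟩ _ ↦ ?_
  have cyclic_eq : ∏ i, ((((tripleEquivRatios _ (x, a, b)) i : Fˣ) : F) -
      ((tripleEquivRatios _ (x, a, b)) (i + 1) : Fˣ)) =
      -1 * (x : Fˣ) ^ 3 * (a : Fˣ) * (1 - (a : Fˣ)) * (1 - (b : Fˣ)) *
        (1 - ((a * b : rootsOfUnity k F) : Fˣ)) := by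
    simp only [tripleEquivRatios, Fin.isValue, Equiv.coe_fn_mk, Fin.prod_univ_three, cons_val_zero,
      zero_add, cons_val_one, Subgroup.coe_mul, Units.val_mul, Fin.reduceAdd, cons_val]
    ring
  simp only [cyclic_eq, map_mul, map_pow, hneg, hroots, one_pow, one_mul, rootSign]

end RootsOfUnity

/-- Theorem 3.1: if `e = (q-1)/k` is even and `(q,k)` gives a 3-design, then
`k ≡ 1, 2, 5, 10, 13, 17 (mod 24)`. -/
theorem stmt_7 (F : Type) [Field F] [Fintype F] [DecidableEq F]
    (q k : ℕ) (hq : Fintype.card F = q) (hqodd : Odd q) (hq4 : q % 4 = 1)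
    (hkdvd : k ∣ q - 1) (hk3 : 3 < k) (hkq : k < q - 1)
    (he : Even ((q - 1) / k))
    (hdes : gives3Design F k) :
    k % 24 = 1 ∨ k % 24 = 2 ∨ k % 24 = 5 ∨ k % 24 = 10 ∨ k % 24 = 13 ∨ k % 24 = 17 := by
  subst hq
  have : NeZero k := ⟨by omega⟩
  have := Fintype.ofFinite (rootsOfUnity k F)
  have hF : ringChar F ≠ 2 := fun h ↦ by
    have := FiniteField.even_card_of_char_two h
    omega
  have two_mul_dvd : 2 * k ∣ Fintype.card F - 1 :=
    Nat.mul_comm k 2 ▸ Nat.mul_dvd_of_dvd_div hkdvd he.two_dvd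
  have hneg : quadraticChar F (-1) = 1 := quadraticChar_neg_one_eq_one (by omega)
  have hroots (x : rootsOfUnity k F) : quadraticChar F (x : Fˣ) = 1 :=
    quadraticChar_eq_one_of_pow_eq_one hF two_mul_dvd (Units.ne_zero _)
      ((mem_rootsOfUnity' k _).1 x.2)
  have sum_eq_zero := (sum_quadraticChar_cyclic_eq_mul_sum hneg hroots).symm.trans
    (sum_quadraticChar_cyclic_eq_zero hF hdes)
  have card_mem := (isEvenSign_rootSign hneg hroots).card_mod_twentyFour
    ((mul_eq_zero.1 sum_eq_zero).resolve_left (mod_cast Fintype.card_ne_zero))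
  rw [← Nat.card_eq_fintype_card, natCard_rootsOfUnity_of_dvd hkdvd] at card_mem
  simpa only [Finset.mem_insert, Finset.mem_singleton] using card_mem
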